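/- (Validity of conventional split conformal prediction) Let X and Y be measurable spaces, let (x_1, y_1), …, (x_N, y_N), (x, y) be i.i.d. random pairs with values in X × Y, and let s : X × Y → ℝ be a measurable scoring function. Let α ∈ (0,1) satisfy α ≥ 1/(N+1) and let Q_{1−α} be the ⌈(1−α)(N+1)⌉-th smallest value among the calibration scores s(x_1, y_1), …, s(x_N, y_N). Define the set predictor Γ(x) = { y' ∈ Y : s(x, y') ≤ Q_{1−α} }. Then Pr( y ∈ Γ(x) ) ≥ 1 − α, where the probability is over the calibration pairs and the test pair. -/

import Mathlib

open MeasureTheory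

/-- The `k`-th smallest value (counting multiplicities) of a list of reals:
the `k`-th entry of the list sorted in nondecreasing order. -/
noncomputable def kthSmallest (l : List ℝ) (k : ℕ) : ℝ :=
  (l.mergeSort (fun a b => @decide (a ≤ b) (Classical.propDecidable _))).getD (k - 1) 0

/-! The conclusion only needs the `N + 1` scores to be exchangeable. For every realisation, at
least `k` of the `N + 1` indices `j` have fewer than `k` scores strictly below the `j`-th one, and
by exchangeability each index is equally likely to be among them; hence the test score has this
property with probability at least `k / (N + 1)`. The test score is never strictly below itself, so
for it the property says that fewer than `k` calibration scores lie strictly below it, i.e. that it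
is at most the `k`-th smallest calibration score. -/

open Finset ProbabilityTheory
open scoped ENNReal

section OrderStatistics

theorem countP_ofFn_eq_card {β : Type*} {n : ℕ} (f : Fin n → β) (p : β → Prop)
    [DecidablePred p] : (List.ofFn f).countP (p ·) = #{i | p (f i)} := by
  rw [List.ofFn_eq_map, List.countP_map, ← List.toFinset_finRange,
    (List.nodup_finRange n).card_eq_countP]
  rfl

theorem lt_countP_lt_iff_getElem_lt {β : Type*} [Preorder β] [DecidableLT β] {l : List β}
    (hl : l.SortedLE) {i : ℕ} (hi : i < l.length) (t : β) :
    i < l.countP (· < t) ↔ l[i] < t := by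
  have hcount := countP_ofFn_eq_card l.get (· < t)
  rw [List.ofFn_get] at hcount
  rw [hcount]
  exact Tuple.lt_card_lt_iff_apply_lt_of_monotone (j := ⟨i, hi⟩) hl

theorem le_kthSmallest_iff {l : List ℝ} {k : ℕ} (hk : 1 ≤ k) (hkl : k ≤ l.length) (t : ℝ) :
    t ≤ kthSmallest l k ↔ l.countP (· < t) < k := by
  unfold kthSmallest
  set m := l.mergeSort fun a b => @decide (a ≤ b) (Classical.propDecidable _)
  have hperm : m.Perm l := List.mergeSort_perm _ _
  have hsorted : m.SortedLE := by
    classical exact (List.pairwise_mergeSort' (· ≤ ·) l).sortedLE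
  have hlt : k - 1 < m.length := by rw [hperm.length_eq]; lia
  rw [← hperm.countP_eq, List.getD_eq_getElem _ _ hlt, ← not_lt,
    ← lt_countP_lt_iff_getElem_lt hsorted hlt]
  lia

end OrderStatistics

section StrictRank

variable {ι β : Type*} [Fintype ι] [LinearOrder β]

/-- The number of entries of the family `v` strictly below `v j`. Tied entries share the same
strict rank, and the smallest entries have strict rank `0`. -/
def strictRank (v : ι → β) (j : ι) : ℕ := #{i | v i < v j}

theorem strictRank_comp_equiv {κ : Type*} [Fintype κ] (v : ι → β) (e : κ ≃ ι) (j : κ) :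
    strictRank (fun i => v (e i)) j = strictRank v (e j) :=
  card_equiv e (by simp)

theorem le_card_strictRank_lt (v : ι → β) {k : ℕ} (hk : k ≤ Fintype.card ι) :
    k ≤ #{j | strictRank v j < k} := by
  by_cases hall : ∀ j, strictRank v j < k
  · simpa only [hall, filter_true, card_univ] using hk
  -- Below a smallest entry whose strict rank is at least `k`, every entry has strict rank `< k`.
  · obtain ⟨j, hj, hmin⟩ := exists_min_image {j | k ≤ strictRank v j} v
      (by simpa [Finset.Nonempty] using hall)
    calc k ≤ #{i | v i < v j} := (mem_filter_univ j).1 hj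
      _ ≤ #{i | strictRank v i < k} := card_le_card fun i hi => by
        by_contra hik
        simp only [mem_filter_univ, not_lt] at hi hik
        exact (hmin i ((mem_filter_univ i).2 hik)).not_gt hi

theorem strictRank_last {N : ℕ} (v : Fin (N + 1) → β) :
    strictRank v (Fin.last N) =
      (List.ofFn fun i : Fin N => v i.castSucc).countP (· < v (Fin.last N)) := by
  rw [countP_ofFn_eq_card (fun i : Fin N => v i.castSucc) (· < v (Fin.last N)), strictRank,
    card_filter, card_filter, Fin.sum_univ_castSucc, if_neg (lt_irrefl _), add_zero]

theorem measurable_strictRank [TopologicalSpace β] [OrderClosedTopology β]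
    [SecondCountableTopology β] [MeasurableSpace β] [OpensMeasurableSpace β] (j : ι) :
    Measurable fun v : ι → β => strictRank v j := by
  simp only [strictRank, card_filter]
  exact Finset.measurable_sum _ fun i _ => Measurable.ite
    (measurableSet_lt (measurable_pi_apply i) (measurable_pi_apply j))
    measurable_const measurable_const

end StrictRank

theorem natCast_mul_measure_univ_le_sum_measure {Ω ι : Type*} [MeasurableSpace Ω] [Fintype ι]
    {μ : Measure Ω} {A : ι → Set Ω} (hA : ∀ j, NullMeasurableSet (A j) μ) {k : ℕ}
    (hk : ∀ ω, k ≤ {j | ω ∈ A j}.ncard) : k * μ Set.univ ≤ ∑ j, μ (A j) := by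
  classical
  have hind : ∀ j, AEMeasurable ((A j).indicator (1 : Ω → ℝ≥0∞)) μ := fun j =>
    aemeasurable_one.indicator₀ (hA j)
  calc k * μ Set.univ = ∫⁻ _, k ∂μ := (lintegral_const _).symm
    _ ≤ ∫⁻ ω, ∑ j, (A j).indicator 1 ω ∂μ := lintegral_mono fun ω => by
        have hcard : k ≤ #{j | ω ∈ A j} := by
          simpa [Set.ncard_eq_toFinset_card'] using hk ω
        simpa [Set.indicator_apply] using hcard
    _ = ∑ j, μ (A j) := by
        rw [lintegral_finsetSum' _ fun j _ => hind j]
        simp only [lintegral_indicator_one₀ (hA _)]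

section Exchangeable

variable {Ω ι E F : Type*} [MeasurableSpace Ω] [MeasurableSpace E] [MeasurableSpace F]
  {P : Measure Ω} {Z : ι → Ω → E}

/-- A family of random variables is exchangeable if permuting its indices does not change its joint
law. Through `IdentDistrib` this includes the a.e. measurability of the family. -/
def Exchangeable (Z : ι → Ω → E) (P : Measure Ω) : Prop :=
  ∀ σ : Equiv.Perm ι, IdentDistrib (fun ω i => Z (σ i) ω) (fun ω i => Z i ω) P P

theorem Exchangeable.comp (hZ : Exchangeable Z P) {u : E → F} (hu : Measurable u) :
    Exchangeable (fun i ω => u (Z i ω)) P :=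
  fun σ => (hZ σ).comp (u := fun z i => u (z i)) (by fun_prop)

variable [Fintype ι]

theorem measurePreserving_pi_comp_perm (ν : Measure E) [SigmaFinite ν] (σ : Equiv.Perm ι) :
    MeasurePreserving (fun (z : ι → E) i => z (σ i)) (Measure.pi fun _ => ν)
      (Measure.pi fun _ => ν) :=
  measurePreserving_arrowCongr' (fun _ => ν) (fun _ => ν) σ.symm (.refl E) fun _ => .id ν

theorem exchangeable_of_map_eq_pi {ν : Measure E} [SigmaFinite ν]
    (hZ : ∀ i, AEMeasurable (Z i) P)
    (hmap : P.map (fun ω i => Z i ω) = Measure.pi fun _ => ν) : Exchangeable Z P := by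
  intro σ
  have hσ := measurePreserving_pi_comp_perm ν σ
  have hjoint : AEMeasurable (fun ω i => Z i ω) P := aemeasurable_pi_lambda _ hZ
  refine ⟨aemeasurable_pi_lambda _ fun i => hZ (σ i), hjoint, ?_⟩
  calc P.map (fun ω i => Z (σ i) ω)
      = (P.map fun ω i => Z i ω).map fun z i => z (σ i) :=
        (AEMeasurable.map_map_of_aemeasurable hσ.measurable.aemeasurable hjoint).symm
    _ = P.map fun ω i => Z i ω := by rw [hmap, hσ.map_eq]

variable {β : Type*} [LinearOrder β] [TopologicalSpace β] [OrderClosedTopology β]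
  [SecondCountableTopology β] [MeasurableSpace β] [OpensMeasurableSpace β] {V : ι → Ω → β}

theorem Exchangeable.measure_strictRank_lt_eq (hV : Exchangeable V P) (k : ℕ) (i j : ι) :
    P {ω | strictRank (V · ω) i < k} = P {ω | strictRank (V · ω) j < k} := by
  classical
  have hrank : ∀ ω, strictRank (fun l => V (Equiv.swap i j l) ω) j = strictRank (V · ω) i :=
    fun ω => by rw [strictRank_comp_equiv (V · ω), Equiv.swap_apply_right]
  simp only [← hrank]
  exact (hV (Equiv.swap i j)).measure_mem_eq
    (measurable_strictRank j (measurableSet_Iio (a := k)))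

theorem Exchangeable.natCast_mul_measure_univ_le (hV : Exchangeable V P) {k : ℕ}
    (hk : k ≤ Fintype.card ι) (j : ι) :
    k * P Set.univ ≤ Fintype.card ι * P {ω | strictRank (V · ω) j < k} := by
  have hnull : ∀ i, NullMeasurableSet {ω | strictRank (V · ω) i < k} P := fun i =>
    (hV 1).aemeasurable_snd.nullMeasurable
      (measurable_strictRank i (measurableSet_Iio (a := k)))
  calc k * P Set.univ ≤ ∑ i, P {ω | strictRank (V · ω) i < k} :=
        natCast_mul_measure_univ_le_sum_measure hnull fun ω => by
          simpa [Set.ncard_eq_toFinset_card'] using le_card_strictRank_lt (V · ω) hk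
    _ = Fintype.card ι * P {ω | strictRank (V · ω) j < k} := by
        simp only [hV.measure_strictRank_lt_eq k _ j, sum_const, card_univ, nsmul_eq_mul]

end Exchangeable

theorem Exchangeable.div_le_measure_le_kthSmallest {Ω : Type*} [MeasurableSpace Ω]
    {P : Measure Ω} [IsProbabilityMeasure P] {N : ℕ} {V : Fin (N + 1) → Ω → ℝ}
    (hV : Exchangeable V P) {k : ℕ} (hk : 1 ≤ k) (hkN : k ≤ N) :
    (k : ℝ≥0∞) / (N + 1 : ℕ) ≤
      P {ω | V (Fin.last N) ω ≤ kthSmallest (List.ofFn fun i : Fin N => V i.castSucc ω) k} := by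
  have hevent : ∀ ω, V (Fin.last N) ω ≤ kthSmallest (List.ofFn fun i : Fin N => V i.castSucc ω) k ↔
      strictRank (V · ω) (Fin.last N) < k := fun ω => by
    rw [le_kthSmallest_iff hk (by simpa only [List.length_ofFn] using hkN), strictRank_last]
  simp only [hevent]
  refine ENNReal.div_le_of_le_mul' ?_
  simpa only [measure_univ, mul_one, Fintype.card_fin] using
    hV.natCast_mul_measure_univ_le (by simpa using hkN.trans N.le_succ) (Fin.last N)

theorem split_conformal_validity_general {Ω : Type*} [MeasurableSpace Ω] (P : Measure Ω)
    [IsProbabilityMeasure P] {N : ℕ} {V : Fin (N + 1) → Ω → ℝ} (hV : Exchangeable V P)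
    {α : ℝ} (hα1 : α < 1) (hαN : 1 / ((N : ℝ) + 1) ≤ α) :
    ENNReal.ofReal (1 - α) ≤
      P {ω | V (Fin.last N) ω ≤ kthSmallest (List.ofFn fun i : Fin N => V i.castSucc ω)
        ⌈(1 - α) * ((N : ℝ) + 1)⌉₊} := by
  have hN : (0 : ℝ) < N + 1 := by positivity
  set k := ⌈(1 - α) * ((N : ℝ) + 1)⌉₊
  have hk_pos : 1 ≤ k := Nat.ceil_pos.2 (mul_pos (sub_pos.2 hα1) hN)
  have hk_le : k ≤ N := by
    rw [div_le_iff₀ hN] at hαN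
    exact Nat.ceil_le.2 (by linarith)
  refine le_trans ?_ (hV.div_le_measure_le_kthSmallest hk_pos hk_le)
  calc ENNReal.ofReal (1 - α) ≤ ENNReal.ofReal (k / (N + 1 : ℕ)) := by
        push_cast
        exact ENNReal.ofReal_le_ofReal ((le_div_iff₀ hN).2 (Nat.le_ceil _))
    _ = k / (N + 1 : ℕ) := by
        rw [ENNReal.ofReal_div_of_pos (by positivity), ENNReal.ofReal_natCast,
          ENNReal.ofReal_natCast]

/-- Validity of conventional split conformal prediction: let the calibration pairs
`(x i, y i)`, `i = 1, …, N`, and the test pair `(x (N+1), y (N+1))` be i.i.d. with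
common law `ν`, let `s` be a measurable scoring function, `α ∈ (0,1)` with
`α ≥ 1/(N+1)`, and let `Q` be the `⌈(1-α)(N+1)⌉`-th smallest calibration score.
Then the set predictor `Γ(x) = {y' | s (x, y') ≤ Q}` satisfies
`Pr(y (N+1) ∈ Γ(x (N+1))) ≥ 1 - α`. -/
theorem split_conformal_validity
    {X Y : Type*} [MeasurableSpace X] [MeasurableSpace Y]
    {Ω : Type*} [MeasurableSpace Ω] (P : Measure Ω) [IsProbabilityMeasure P]
    (N : ℕ) (x : Fin (N + 1) → Ω → X) (y : Fin (N + 1) → Ω → Y)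
    (hmeas : ∀ i, Measurable fun ω => (x i ω, y i ω))
    (ν : Measure (X × Y)) [IsProbabilityMeasure ν]
    (hiid : Measure.map (fun ω (i : Fin (N + 1)) => (x i ω, y i ω)) P
      = Measure.pi fun _ => ν)
    (s : X × Y → ℝ) (hs : Measurable s)
    (α : ℝ) (hα0 : 0 < α) (hα1 : α < 1) (hαN : 1 / ((N : ℝ) + 1) ≤ α) :
    ENNReal.ofReal (1 - α) ≤
      P {ω | y (Fin.last N) ω ∈
        {y' : Y | s (x (Fin.last N) ω, y') ≤
          kthSmallest (List.ofFn fun i : Fin N => s (x i.castSucc ω, y i.castSucc ω))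
            ⌈(1 - α) * ((N : ℝ) + 1)⌉₊}} := by
  have hpairs := exchangeable_of_map_eq_pi (fun i => (hmeas i).aemeasurable) hiid
  exact split_conformal_validity_general P (hpairs.comp hs) hα1 hαN
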